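/- For every random vector X = (X_1,…,X_n) of integrable random variables and every α ∈ (0,1), DQ^ES_α(X) = 0 if and only if X_1 + ⋯ + X_n ≤ Σ_{i=1}^n ES_α(X_i) almost surely. -/

import Mathlib

open MeasureTheory ProbabilityTheory Filter Set

namespace DQ

variable {Ω : Type*} [MeasurableSpace Ω]

/-- An atomless probability measure: every non-null measurable set has a measurable
subset of strictly smaller positive measure. -/
def Atomless (P : Measure Ω) : Prop :=
  ∀ A : Set Ω, MeasurableSet A → 0 < P A →
    ∃ B, MeasurableSet B ∧ B ⊆ A ∧ 0 < P B ∧ P B < P A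

/-- Value-at-Risk at level `α` (small-`α` convention):
`VaR_α(X) = inf {x | P(X ≤ x) ≥ 1 - α}`. -/
noncomputable def VaR (P : Measure Ω) (α : ℝ) (X : Ω → ℝ) : ℝ :=
  sInf {x : ℝ | 1 - α ≤ (P {ω | X ω ≤ x}).toReal}

/-- Expected Shortfall at level `α`: `ES_α(X) = (1/α) ∫_0^α VaR_β(X) dβ`. -/
noncomputable def ES (P : Measure Ω) (α : ℝ) (X : Ω → ℝ) : ℝ :=
  (1 / α) * ∫ β in Set.Ioo (0 : ℝ) α, VaR P β X

/-- `α* = inf {β ∈ (0,1) | VaR_β(∑ Xᵢ) ≤ ∑ VaR_α(Xᵢ)}`, with `inf ∅ = 1`. -/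
noncomputable def alphaStarVaR (P : Measure Ω) (α : ℝ) {n : ℕ} (X : Fin n → Ω → ℝ) : ℝ :=
  sInf ({β ∈ Set.Ioo (0 : ℝ) 1 |
    VaR P β (fun ω => ∑ i, X i ω) ≤ ∑ i, VaR P α (X i)} ∪ {1})

/-- Diversification quotient based on VaR: `DQ^VaR_α(X) = α*/α`. -/
noncomputable def DQVaR (P : Measure Ω) (α : ℝ) {n : ℕ} (X : Fin n → Ω → ℝ) : ℝ :=
  alphaStarVaR P α X / α

/-- `α* = inf {β ∈ (0,1) | ES_β(∑ Xᵢ) ≤ ∑ ES_α(Xᵢ)}`, with `inf ∅ = 1`. -/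
noncomputable def alphaStarES (P : Measure Ω) (α : ℝ) {n : ℕ} (X : Fin n → Ω → ℝ) : ℝ :=
  sInf ({β ∈ Set.Ioo (0 : ℝ) 1 |
    ES P β (fun ω => ∑ i, X i ω) ≤ ∑ i, ES P α (X i)} ∪ {1})

/-- Diversification quotient based on ES: `DQ^ES_α(X) = α*/α`. -/
noncomputable def DQES (P : Measure Ω) (α : ℝ) {n : ℕ} (X : Fin n → Ω → ℝ) : ℝ :=
  alphaStarES P α X / α

theorem VaR_le_iff (P : Measure Ω) [IsProbabilityMeasure P] {X : Ω → ℝ} (hX : Measurable X)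
    {β : ℝ} (hβ : β ∈ Set.Ioo (0 : ℝ) 1) (x : ℝ) :
    VaR P β X ≤ x ↔ 1 - β ≤ (P {ω | X ω ≤ x}).toReal := by
  have : IsProbabilityMeasure (P.map X) := Measure.isProbabilityMeasure_map hX.aemeasurable
  have hF : ∀ y, (P {ω | X ω ≤ y}).toReal = cdf (P.map X) y := by
    intro y
    rw [cdf_eq_real, measureReal_def, Measure.map_apply hX measurableSet_Iic]
    rfl
  have hbdd : BddBelow {y : ℝ | 1 - β ≤ (P {ω | X ω ≤ y}).toReal} := by
    have h1 : ∀ᶠ y in atBot, cdf (P.map X) y < 1 - β :=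
      (tendsto_cdf_atBot (P.map X)).eventually_lt_const (by linarith [hβ.2])
    obtain ⟨a, ha⟩ := h1.exists
    refine ⟨a, fun y hy => ?_⟩
    by_contra hlt
    have h2 := monotone_cdf (P.map X) (not_le.mp hlt).le
    have h3 : 1 - β ≤ cdf (P.map X) y := by rw [← hF]; exact hy
    linarith
  have hne : {y : ℝ | 1 - β ≤ (P {ω | X ω ≤ y}).toReal}.Nonempty := by
    have h1 : ∀ᶠ y in atTop, 1 - β < cdf (P.map X) y :=
      (tendsto_cdf_atTop (P.map X)).eventually_const_lt (by linarith [hβ.1])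
    obtain ⟨a, ha⟩ := h1.exists
    refine ⟨a, ?_⟩
    show 1 - β ≤ (P {ω | X ω ≤ a}).toReal
    rw [hF]; exact ha.le
  constructor
  · intro h
    have h1 : 1 - β ≤ cdf (P.map X) (VaR P β X) := by
      have ht : Tendsto (cdf (P.map X)) (nhdsWithin (VaR P β X) (Ioi (VaR P β X)))
          (nhds (cdf (P.map X) (VaR P β X))) :=
        ((cdf (P.map X)).right_continuous (VaR P β X)).mono_left
          (nhdsWithin_mono _ Ioi_subset_Ici_self)
      refine ge_of_tendsto ht ?_
      filter_upwards [self_mem_nhdsWithin] with y hy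
      obtain ⟨z, hz, hzy⟩ := exists_lt_of_csInf_lt hne hy
      have hz' : 1 - β ≤ cdf (P.map X) z := by rw [← hF]; exact hz
      exact hz'.trans (monotone_cdf _ hzy.le)
    rw [hF]
    exact h1.trans (monotone_cdf _ h)
  · intro h
    exact csInf_le hbdd h

theorem VaR_antitoneOn (P : Measure Ω) [IsProbabilityMeasure P] {X : Ω → ℝ} (hX : Measurable X) :
    AntitoneOn (fun β => VaR P β X) (Set.Ioo (0 : ℝ) 1) := by
  intro a ha b hb hab
  show VaR P b X ≤ VaR P a X
  rw [VaR_le_iff P hX hb]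
  have := (VaR_le_iff P hX ha (VaR P a X)).1 le_rfl
  linarith

theorem map_VaR (P : Measure Ω) [IsProbabilityMeasure P] {X : Ω → ℝ} (hX : Measurable X) :
    (volume.restrict (Set.Ioo (0 : ℝ) 1)).map (fun β => VaR P β X) = P.map X := by
  have hm : AEMeasurable (fun β => VaR P β X) (volume.restrict (Set.Ioo (0 : ℝ) 1)) :=
    aemeasurable_restrict_of_antitoneOn measurableSet_Ioo (VaR_antitoneOn P hX)
  have : IsProbabilityMeasure (P.map X) := Measure.isProbabilityMeasure_map hX.aemeasurable
  symm
  refine Measure.ext_of_Iic _ _ fun a => ?_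
  rw [Measure.map_apply_of_aemeasurable hm measurableSet_Iic,
    Measure.map_apply hX measurableSet_Iic, Measure.restrict_apply' measurableSet_Ioo]
  have hset : (fun β => VaR P β X) ⁻¹' Iic a ∩ Set.Ioo (0 : ℝ) 1
      = Ici (1 - (P {ω | X ω ≤ a}).toReal) ∩ Set.Ioo (0 : ℝ) 1 := by
    ext β
    simp only [mem_inter_iff, mem_preimage, mem_Iic, mem_Ici]
    refine and_congr_left fun hβ => ?_
    rw [VaR_le_iff P hX hβ]
    constructor <;> intro h <;> linarith
  rw [hset]
  have hp : (P {ω | X ω ≤ a}).toReal ≤ 1 := by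
    have := prob_le_one (μ := P) (s := {ω | X ω ≤ a})
    exact ENNReal.toReal_le_of_le_ofReal zero_le_one (by simpa using this)
  have hp0 : 0 ≤ (P {ω | X ω ≤ a}).toReal := ENNReal.toReal_nonneg
  have hv : volume (Ici (1 - (P {ω | X ω ≤ a}).toReal) ∩ Set.Ioo (0 : ℝ) 1)
      = ENNReal.ofReal ((P {ω | X ω ≤ a}).toReal) := by
    apply le_antisymm
    · calc _ ≤ volume (Ico (1 - (P {ω | X ω ≤ a}).toReal) 1) :=
            measure_mono fun y hy => ⟨hy.1, hy.2.2⟩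
        _ = _ := by rw [Real.volume_Ico]; congr 1; ring
    · calc _ = volume (Ioo (1 - (P {ω | X ω ≤ a}).toReal) 1) := by
            rw [Real.volume_Ioo]; congr 1; ring
        _ ≤ volume (Ici (1 - (P {ω | X ω ≤ a}).toReal) ∩ Set.Ioo (0 : ℝ) 1) :=
            measure_mono fun y hy => ⟨hy.1.le, by linarith [hy.1], hy.2⟩
  rw [hv, ENNReal.ofReal_toReal (measure_ne_top _ _)]
  rfl

theorem VaR_integrableOn (P : Measure Ω) [IsProbabilityMeasure P] {X : Ω → ℝ} (hX : Measurable X)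
    (hi : Integrable X P) : IntegrableOn (fun β => VaR P β X) (Set.Ioo (0 : ℝ) 1) := by
  have hm : AEMeasurable (fun β => VaR P β X) (volume.restrict (Set.Ioo (0 : ℝ) 1)) :=
    aemeasurable_restrict_of_antitoneOn measurableSet_Ioo (VaR_antitoneOn P hX)
  have h1 : Integrable id (P.map X) :=
    (integrable_map_measure aestronglyMeasurable_id hX.aemeasurable).2 hi
  rw [← map_VaR P hX] at h1
  exact (integrable_map_measure aestronglyMeasurable_id hm).1 h1

theorem ES_le (P : Measure Ω) [IsProbabilityMeasure P] {X : Ω → ℝ} (hX : Measurable X)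
    (hi : Integrable X P) {β c : ℝ} (hβ : β ∈ Set.Ioo (0 : ℝ) 1)
    (h : ∀ γ ∈ Set.Ioo (0 : ℝ) β, VaR P γ X ≤ c) : ES P β X ≤ c := by
  have hI : IntegrableOn (fun γ => VaR P γ X) (Set.Ioo (0 : ℝ) β) :=
    (VaR_integrableOn P hX hi).mono_set (Ioo_subset_Ioo_right hβ.2.le)
  have h2 : ∫ γ in Set.Ioo (0 : ℝ) β, VaR P γ X ≤ ∫ γ in Set.Ioo (0 : ℝ) β, c :=
    setIntegral_mono_on hI (integrableOn_const (by simp)) measurableSet_Ioo h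
  rw [setIntegral_const, measureReal_def, Real.volume_Ioo, sub_zero,
    ENNReal.toReal_ofReal hβ.1.le, smul_eq_mul] at h2
  rw [ES, one_div, inv_mul_le_iff₀ hβ.1]
  exact h2

theorem le_ES (P : Measure Ω) [IsProbabilityMeasure P] {X : Ω → ℝ} (hX : Measurable X)
    (hi : Integrable X P) {β c : ℝ} (hβ : β ∈ Set.Ioo (0 : ℝ) 1)
    (h : ∀ γ ∈ Set.Ioo (0 : ℝ) β, c ≤ VaR P γ X) : c ≤ ES P β X := by
  have hI : IntegrableOn (fun γ => VaR P γ X) (Set.Ioo (0 : ℝ) β) :=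
    (VaR_integrableOn P hX hi).mono_set (Ioo_subset_Ioo_right hβ.2.le)
  have h2 : ∫ γ in Set.Ioo (0 : ℝ) β, c ≤ ∫ γ in Set.Ioo (0 : ℝ) β, VaR P γ X :=
    setIntegral_mono_on (integrableOn_const (by simp)) hI measurableSet_Ioo h
  rw [setIntegral_const, measureReal_def, Real.volume_Ioo, sub_zero,
    ENNReal.toReal_ofReal hβ.1.le, smul_eq_mul] at h2
  rw [ES, one_div, le_inv_mul_iff₀ hβ.1]
  exact h2

theorem sInf_zero_iff (P : Measure Ω) [IsProbabilityMeasure P] {S : Ω → ℝ} (hS : Measurable S)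
    (hi : Integrable S P) (c : ℝ) :
    sInf ({β ∈ Set.Ioo (0 : ℝ) 1 | ES P β S ≤ c} ∪ {1}) = 0 ↔ ∀ᵐ ω ∂P, S ω ≤ c := by
  have hne : ({β ∈ Set.Ioo (0 : ℝ) 1 | ES P β S ≤ c} ∪ {1}).Nonempty := ⟨1, Or.inr rfl⟩
  have hlb : ∀ β ∈ ({β ∈ Set.Ioo (0 : ℝ) 1 | ES P β S ≤ c} ∪ {1}), 0 ≤ β := by
    rintro β (h | h)
    · exact h.1.1.le
    · rw [mem_singleton_iff.1 h]; exact zero_le_one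
  constructor
  · intro h0
    have key : ∀ k : ℕ, ∀ᵐ ω ∂P, S ω ≤ c + 1 / ((k : ℝ) + 1) := by
      intro k
      have hk : (0 : ℝ) < 1 / ((k : ℝ) + 1) := by positivity
      set c' := c + 1 / ((k : ℝ) + 1) with hc'
      by_contra hcon
      have hms : MeasurableSet {ω | S ω ≤ c'} := measurableSet_le hS measurable_const
      have hlt : (P {ω | S ω ≤ c'}).toReal < 1 := by
        have hle := prob_le_one (μ := P) (s := {ω | S ω ≤ c'})
        have hne1 : P {ω | S ω ≤ c'} ≠ 1 := fun h1 => hcon ((mem_ae_iff_prob_eq_one hms).2 h1)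
        have := (ENNReal.toReal_lt_toReal (measure_ne_top _ _) ENNReal.one_ne_top).2
          (lt_of_le_of_ne hle hne1)
        simpa using this
      have hlt' : sInf ({β ∈ Set.Ioo (0 : ℝ) 1 | ES P β S ≤ c} ∪ {1})
          < 1 - (P {ω | S ω ≤ c'}).toReal := by rw [h0]; linarith
      obtain ⟨β, hβ, hβlt⟩ := exists_lt_of_csInf_lt hne hlt'
      have hp0 : 0 ≤ (P {ω | S ω ≤ c'}).toReal := ENNReal.toReal_nonneg
      rcases hβ with ⟨hβ, hES⟩ | h1
      · have : c' ≤ ES P β S := by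
          refine le_ES P hS hi hβ fun γ hγ => ?_
          by_contra hc
          have := (VaR_le_iff P hS ⟨hγ.1, hγ.2.trans hβ.2⟩ c').1 (not_le.1 hc).le
          linarith [hγ.2]
        linarith
      · rw [mem_singleton_iff] at h1
        linarith
    filter_upwards [ae_all_iff.2 key] with ω hω
    refine le_of_forall_pos_le_add fun ε hε => ?_
    obtain ⟨k, hk⟩ := exists_nat_one_div_lt hε
    linarith [hω k]
  · intro hae
    apply le_antisymm
    · refine le_of_forall_pos_le_add fun ε hε => ?_
      have hmin : min ε (1 / 2) ∈ Set.Ioo (0 : ℝ) 1 :=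
        ⟨lt_min hε (by norm_num), (min_le_right _ _).trans_lt (by norm_num)⟩
      have hmem : min ε (1 / 2) ∈ ({β ∈ Set.Ioo (0 : ℝ) 1 | ES P β S ≤ c} ∪ {1}) := by
        refine Or.inl ⟨hmin, ES_le P hS hi hmin fun γ hγ => ?_⟩
        rw [VaR_le_iff P hS ⟨hγ.1, hγ.2.trans hmin.2⟩]
        have hms : MeasurableSet {ω | S ω ≤ c} := measurableSet_le hS measurable_const
        have h1 : P {ω | S ω ≤ c} = 1 := (mem_ae_iff_prob_eq_one hms).1 hae
        rw [h1, ENNReal.toReal_one]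
        linarith [hγ.1]
      have := csInf_le ⟨0, hlb⟩ hmem
      linarith [min_le_left ε (1 / 2)]
    · exact le_csInf hne hlb

end DQ

open DQ in
/-- DQ^ES_α(X) = 0 if and only if X₁ + ⋯ + Xₙ ≤ ∑ᵢ ES_α(Xᵢ) almost surely. -/
theorem stmt4 {Ω : Type*} [MeasurableSpace Ω] (P : Measure Ω) [IsProbabilityMeasure P]
    (hP : Atomless P) (n : ℕ) (X : Fin n → Ω → ℝ) (hX : ∀ i, Measurable (X i))
    (hint : ∀ i, Integrable (X i) P) (α : ℝ) (hα : α ∈ Set.Ioo (0 : ℝ) 1) :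
    DQES P α X = 0 ↔ ∀ᵐ ω ∂P, (∑ i, X i ω) ≤ ∑ i, ES P α (X i) := by
  have hS : Measurable (fun ω => ∑ i, X i ω) :=
    Finset.measurable_sum _ fun i _ => hX i
  have hi : Integrable (fun ω => ∑ i, X i ω) P :=
    integrable_finsetSum _ fun i _ => hint i
  rw [DQES, div_eq_zero_iff, or_iff_left hα.1.ne', alphaStarES]
  exact sInf_zero_iff P hS hi _
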